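/- Assume n is odd and fix indices n₀ ≤ t < j ≤ n. In the tensor product algebra 𝒪_q(B⁺) ⊗_ℂ 𝒪_q(B⁺) define b_s := z_{n₀ s} ⊗ z_{sj} for n₀ ≤ s ≤ j, b_{t+1,j} := Σ_{k=t+1}^{j} b_k, and c_t := b_t b_{t+1,j} − q · b_{t+1,j} b_t. Then: (i) c_t = −(q − q^{−1}) q^{n₀ + 3/2} Σ_{s=t+1}^{j} Σ_{k=n₀+1}^{t} q^{−k} z_{k's} z_{kt} ⊗ z_{sj} z_{tj} (where q^{n₀+3/2} := v^{2n₀+3}); (ii) b_t c_t = q² c_t b_t; (iii) c_t b_{t+1,j} = q² b_{t+1,j} c_t. -/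

import Mathlib

noncomputable section
open scoped TensorProduct

namespace SOq

/-- `pr n k = n + 1 - k`, the "primed" index `k'`. -/
def pr (n k : ℕ) : ℕ := n + 1 - k

/-- `2 ρ_i` as an integer. -/
def twoRho (n i : ℕ) : ℤ :=
  if 2 * i < n + 1 then (n : ℤ) - 2 * i
  else if 2 * i = n + 1 then 0
  else (n : ℤ) + 2 - 2 * i

/-- Entries of the matrix `J`: `c_{ij} = δ_{j,i'} q^{-ρ_i}` (with `q^{1/2} := v`). -/
def Jc (n : ℕ) (v : ℂ) (i j : ℕ) : ℂ :=
  if j = pr n i then v ^ (-(twoRho n i)) else 0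

/-- R-matrix coefficients `R^{ij}_{ab}`. -/
def Rc (n : ℕ) (q v : ℂ) (i j a b : ℕ) : ℂ :=
  q ^ (((if i = j then 1 else 0) - (if i = pr n j then 1 else 0) : ℤ)) *
      (if i = a then (1 : ℂ) else 0) * (if j = b then (1 : ℂ) else 0) +
    (if a < i then (1 : ℂ) else 0) * (q - q⁻¹) *
      ((if j = a then (1 : ℂ) else 0) * (if i = b then (1 : ℂ) else 0) -
        Jc n v j i * Jc n v a b)

/-- The free algebra on the generators `z_{ij}`. -/
abbrev FA : Type := FreeAlgebra ℂ (ℕ × ℕ)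

def zf (i j : ℕ) : FA := FreeAlgebra.ι ℂ (i, j)

/-- The FRT relation element `FRT(i,b,j,a)`. -/
def frtRel (n : ℕ) (q v : ℂ) (i b j a : ℕ) : FA :=
  ∑ k ∈ Finset.Icc 1 n, ∑ l ∈ Finset.Icc 1 n,
    (Rc n q v l k a b • (zf i k * zf j l) - Rc n q v j i k l • (zf k a * zf l b))

/-- Entry `(i,j)` of `z J zᵗ J⁻¹ - Id` (note `J⁻¹ = J`). -/
def orthRel₁ (n : ℕ) (v : ℂ) (i j : ℕ) : FA :=
  (∑ k ∈ Finset.Icc 1 n, ∑ l ∈ Finset.Icc 1 n, ∑ m ∈ Finset.Icc 1 n,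
      (Jc n v k l * Jc n v m j) • (zf i k * zf m l)) - (if i = j then (1 : FA) else 0)

/-- Entry `(i,j)` of `J zᵗ J⁻¹ z - Id`. -/
def orthRel₂ (n : ℕ) (v : ℂ) (i j : ℕ) : FA :=
  (∑ k ∈ Finset.Icc 1 n, ∑ l ∈ Finset.Icc 1 n, ∑ m ∈ Finset.Icc 1 n,
      (Jc n v i k * Jc n v l m) • (zf l k * zf m j)) - (if i = j then (1 : FA) else 0)

/-- The defining relations of the quantum Borel algebra `𝒪_q(B⁺) ⊆ 𝒪_q(SO_n)`. -/
inductive Rel (n : ℕ) (q v : ℂ) : FA → FA → Prop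
  | frt : ∀ i b j a : ℕ, i ∈ Finset.Icc 1 n → b ∈ Finset.Icc 1 n → j ∈ Finset.Icc 1 n →
      a ∈ Finset.Icc 1 n → Rel n q v (frtRel n q v i b j a) 0
  | orth₁ : ∀ i j : ℕ, i ∈ Finset.Icc 1 n → j ∈ Finset.Icc 1 n →
      Rel n q v (orthRel₁ n v i j) 0
  | orth₂ : ∀ i j : ℕ, i ∈ Finset.Icc 1 n → j ∈ Finset.Icc 1 n →
      Rel n q v (orthRel₂ n v i j) 0
  | lower : ∀ i j : ℕ, j < i → Rel n q v (zf i j) 0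
  | out : ∀ i j : ℕ, (i = 0 ∨ j = 0 ∨ n < i ∨ n < j) → Rel n q v (zf i j) 0

/-- The quantum Borel algebra `𝒪_q(B⁺)`. -/
abbrev OB (n : ℕ) (q v : ℂ) : Type := RingQuot (Rel n q v)

/-- The generators `z_{ij}` of `𝒪_q(B⁺)`. -/
def z (n : ℕ) (q v : ℂ) (i j : ℕ) : OB n q v :=
  RingQuot.mkAlgHom ℂ (Rel n q v) (zf i j)

end SOq

namespace SOq

lemma gen_neg {A : Type*} [Ring A] [Algebra ℂ A] (d : ℂ) (x : A) : (-d) • x = -(d • x) :=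
  neg_smul _ _

lemma gen_tensor {A : Type*} [Ring A] [Algebra ℂ A] (q d : ℂ) (p x w : A) :
    q • ((p - d • x) ⊗ₜ[ℂ] w) - q • (p ⊗ₜ[ℂ] w) = (-(q * d)) • (x ⊗ₜ[ℂ] w) := by
  rw [TensorProduct.sub_tmul, ← TensorProduct.smul_tmul']
  module

lemma frt_eq (n : ℕ) (q v : ℂ) (i b j a : ℕ) (hi : i ∈ Finset.Icc 1 n) (hb : b ∈ Finset.Icc 1 n)
    (hj : j ∈ Finset.Icc 1 n) (ha : a ∈ Finset.Icc 1 n) :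
    ∑ k ∈ Finset.Icc 1 n, ∑ l ∈ Finset.Icc 1 n, Rc n q v l k a b • (z n q v i k * z n q v j l) =
    ∑ k ∈ Finset.Icc 1 n, ∑ l ∈ Finset.Icc 1 n, Rc n q v j i k l • (z n q v k a * z n q v l b) := by
  have h := RingQuot.mkAlgHom_rel ℂ (Rel.frt (n := n) (q := q) (v := v) i b j a hi hb hj ha)
  simp only [frtRel, map_sum, map_sub, map_smul, map_mul, map_zero, Finset.sum_sub_distrib] at h
  exact sub_eq_zero.mp h

lemma z_lower (n : ℕ) (q v : ℂ) (i j : ℕ) (h : j < i) : z n q v i j = 0 := by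
  have h := RingQuot.mkAlgHom_rel ℂ (Rel.lower (n := n) (q := q) (v := v) i j h)
  simpa [z] using h

lemma lhs_eq (n : ℕ) (q v : ℂ) (i b j a : ℕ) (hb : b ∈ Finset.Icc 1 n)
    (ha : a ∈ Finset.Icc 1 n) (hab : a + b ≠ n + 1) :
    ∑ k ∈ Finset.Icc 1 n, ∑ l ∈ Finset.Icc 1 n, Rc n q v l k a b • (z n q v i k * z n q v j l) =
    (if a = b then q else 1) • (z n q v i b * z n q v j a) +
    (if a < b then q - q⁻¹ else 0) • (z n q v i a * z n q v j b) := by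
  have hJ : Jc n v a b = 0 := by
    simp only [Finset.mem_Icc] at hb ha
    unfold Jc pr; rw [if_neg]; omega
  have e : ∀ k ∈ Finset.Icc 1 n, ∀ l ∈ Finset.Icc 1 n,
      Rc n q v l k a b • (z n q v i k * z n q v j l) =
      (if k = b then (if l = a then (if a = b then q else 1) • (z n q v i b * z n q v j a) else 0) else 0) +
      (if k = a then (if l = b then (if a < b then q - q⁻¹ else 0) • (z n q v i a * z n q v j b) else 0) else 0) := by
    intro k hk l hl
    simp only [Finset.mem_Icc] at hk hl hb ha
    unfold Rc
    rw [hJ, mul_zero, sub_zero, add_smul]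
    congr 1
    · by_cases h1 : k = b
      · by_cases h2 : l = a
        · subst h1 h2
          have : l ≠ pr n k := by unfold pr; omega
          by_cases h3 : l = k <;> simp [this, h3]
          subst h3; simp [this]
        · simp [h2]
      · simp [h1]
    · by_cases h1 : k = a
      · by_cases h2 : l = b
        · subst h1 h2
          by_cases h3 : k < l <;> simp [h3]
        · simp [h2]
      · simp [h1]
  rw [Finset.sum_congr rfl fun k hk => Finset.sum_congr rfl (e k hk)]
  simp only [Finset.sum_add_distrib]
  congr 1
  · rw [Finset.sum_eq_single_of_mem b hb (by intro k _ h; simp [h]),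
      Finset.sum_eq_single_of_mem a ha (by intro k _ h; simp [h])]
    simp
  · rw [Finset.sum_eq_single_of_mem a ha (by intro k _ h; simp [h]),
      Finset.sum_eq_single_of_mem b hb (by intro k _ h; simp [h])]
    simp

lemma rhs_eq (n : ℕ) (q v : ℂ) (i b j a : ℕ) (hi : i ∈ Finset.Icc 1 n)
    (hj : j ∈ Finset.Icc 1 n) (hij : i + j ≠ n + 1) :
    ∑ k ∈ Finset.Icc 1 n, ∑ l ∈ Finset.Icc 1 n, Rc n q v j i k l • (z n q v k a * z n q v l b) =
    (if i = j then q else 1) • (z n q v j a * z n q v i b) +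
    (if i < j then q - q⁻¹ else 0) • (z n q v i a * z n q v j b) := by
  have hJ : Jc n v i j = 0 := by
    simp only [Finset.mem_Icc] at hi hj
    unfold Jc pr; rw [if_neg]; omega
  have hp : j ≠ pr n i := by
    simp only [Finset.mem_Icc] at hi hj
    unfold pr; omega
  have e : ∀ k ∈ Finset.Icc 1 n, ∀ l ∈ Finset.Icc 1 n,
      Rc n q v j i k l • (z n q v k a * z n q v l b) =
      (if k = j then (if l = i then (if i = j then q else 1) • (z n q v j a * z n q v i b) else 0) else 0) +
      (if k = i then (if l = j then (if i < j then q - q⁻¹ else 0) • (z n q v i a * z n q v j b) else 0) else 0) := by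
    intro k hk l hl
    unfold Rc
    rw [hJ, zero_mul, sub_zero, add_smul]
    congr 1
    · by_cases h1 : k = j
      · by_cases h2 : l = i
        · subst h1 h2
          by_cases h3 : k = l
          · subst h3; simp [hp]
          · simp [hp, h3, Ne.symm h3]
        · simp [h2, Ne.symm h2]
      · simp [h1, Ne.symm h1]
    · by_cases h1 : k = i
      · by_cases h2 : l = j
        · subst h1 h2
          by_cases h3 : k < l <;> simp [h3]
        · simp [h2, Ne.symm h2]
      · simp [h1, Ne.symm h1]
  rw [Finset.sum_congr rfl fun k hk => Finset.sum_congr rfl (e k hk)]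
  simp only [Finset.sum_add_distrib]
  congr 1
  · rw [Finset.sum_eq_single_of_mem j hj (by intro k _ h; simp [h]),
      Finset.sum_eq_single_of_mem i hi (by intro k _ h; simp [h])]
    simp
  · rw [Finset.sum_eq_single_of_mem i hi (by intro k _ h; simp [h]),
      Finset.sum_eq_single_of_mem j hj (by intro k _ h; simp [h])]
    simp

lemma frt_gen (n : ℕ) (q v : ℂ) (i b j a : ℕ) (hi : i ∈ Finset.Icc 1 n) (hb : b ∈ Finset.Icc 1 n)
    (hj : j ∈ Finset.Icc 1 n) (ha : a ∈ Finset.Icc 1 n)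
    (hij : i + j ≠ n + 1) (hab : a + b ≠ n + 1) :
    (if a = b then q else 1) • (z n q v i b * z n q v j a) +
    (if a < b then q - q⁻¹ else 0) • (z n q v i a * z n q v j b) =
    (if i = j then q else 1) • (z n q v j a * z n q v i b) +
    (if i < j then q - q⁻¹ else 0) • (z n q v i a * z n q v j b) := by
  rw [← lhs_eq n q v i b j a hb ha hab, ← rhs_eq n q v i b j a hi hj hij]
  exact frt_eq n q v i b j a hi hb hj ha

/-- the relation for the middle row, with `n = 2m+1`, `n₀ = m+1`, `m+1 ≤ t < s ≤ n` -/
lemma frt_mid (n m : ℕ) (q v : ℂ) (hv0 : v ≠ 0) (hv : v ^ 2 = q) (hm : n = 2 * m + 1) (s t : ℕ)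
    (ht : m + 1 ≤ t) (hts : t < s) (hs : s ≤ n) :
    z n q v (m+1) t * z n q v (m+1) s = z n q v (m+1) s * z n q v (m+1) t -
      ((q - q⁻¹) * v ^ (2 * (m + 1) + 1)) • ∑ k ∈ Finset.Icc (m + 2) t, (q ^ (-(k : ℤ))) •
        (z n q v (pr n k) s * z n q v k t) := by
  have H := frt_eq n q v (m+1) t (m+1) s (by simp; omega) (by simp; omega) (by simp; omega)
    (by simp; omega)
  rw [lhs_eq n q v (m+1) t (m+1) s (by simp; omega) (by simp; omega) (by omega)] at H
  rw [if_neg (by omega), if_neg (by omega), one_smul, zero_smul, add_zero] at H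
  rw [H]
  have hp : pr n (m+1) = m + 1 := by unfold pr; omega
  have hJ : Jc n v (m+1) (m+1) = 1 := by
    unfold Jc twoRho
    rw [if_pos hp.symm, if_neg (by omega), if_pos (by omega)]; simp
  have e : ∀ k ∈ Finset.Icc 1 n, ∑ l ∈ Finset.Icc 1 n,
      Rc n q v (m+1) (m+1) k l • (z n q v k s * z n q v l t) =
      (if k = m + 1 then z n q v (m+1) s * z n q v (m+1) t else 0) -
      (if k < m + 1 then ((q - q⁻¹) * v ^ (-(twoRho n k))) •
        (z n q v k s * z n q v (pr n k) t) else 0) := by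
    intro k hk
    simp only [Finset.mem_Icc] at hk
    rcases lt_trichotomy k (m+1) with h | h | h
    · rw [Finset.sum_eq_single_of_mem (pr n k) (by simp [pr]; omega)]
      · have hJk : Jc n v k (pr n k) = v ^ (-(twoRho n k)) := by simp [Jc]
        simp [Rc, hp, hJ, h, h.ne, h.ne', hJk]
        exact gen_neg (A := OB n q v) _ _
      · intro l _ hl
        have hJk : Jc n v k l = 0 := by simp [Jc, hl]
        simp [Rc, hp, h.ne', hJk]
    · subst h
      rw [Finset.sum_eq_single_of_mem (m+1) (by simp; omega)]
      · simp [Rc, hp]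
      · intro l _ hl
        simp [Rc, hp, hl.symm]
    · apply (Finset.sum_eq_zero _).trans
      · simp [h.ne', h.le, not_lt.mpr h.le]
      · intro l _
        simp [Rc, hp, h.ne, h.le, not_lt.mpr h.le]
  rw [Finset.sum_congr rfl e, Finset.sum_sub_distrib]
  congr 1
  · rw [Finset.sum_eq_single_of_mem (m+1) (by simp; omega) (by intro k _ h; simp [h])]
    simp
  · rw [← Finset.sum_filter, Finset.smul_sum]
    symm
    apply Finset.sum_of_injOn (fun k => pr n k)
    · intro x hx y hy h
      simp only [Finset.coe_Icc, Set.mem_Icc] at hx hy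
      simp only [pr] at h; omega
    · intro x hx
      simp only [Finset.coe_Icc, Set.mem_Icc] at hx
      simp [pr]; omega
    · intro k hk hk'
      simp only [Finset.mem_filter, Finset.mem_Icc] at hk
      have : t < pr n k := by
        by_contra hc
        apply hk'
        refine ⟨pr n k, ?_, ?_⟩
        · simp only [pr] at hc ⊢
          simp; omega
        · simp only [pr]; omega
      rw [z_lower n q v _ _ this]; simp
    · intro k hk
      simp only [Finset.mem_Icc] at hk
      have : pr n (pr n k) = k := by simp only [pr]; omega
      rw [this, smul_smul]
      congr 1
      rw [mul_assoc]
      congr 1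
      rw [← hv, ← zpow_natCast v (2 * (m + 1) + 1), ← zpow_natCast v 2, ← zpow_mul, ← zpow_add₀ hv0]
      congr 1
      have h2 : pr n k = n + 1 - k := rfl
      unfold twoRho
      rw [if_pos (by omega)]
      push_cast
      omega

/-- columns -/
lemma col_rel (n : ℕ) (q v : ℂ) (i j J : ℕ) (hj : 1 ≤ j) (hji : j < i) (hi : i ≤ n)
    (hij : i + j ≠ n + 1) (hJ1 : 1 ≤ J) (hJ : J ≤ n) (hJJ : J + J ≠ n + 1) :
    z n q v j J * z n q v i J = q • (z n q v i J * z n q v j J) := by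
  have H := frt_gen n q v i J j J (by simp; omega) (by simp; omega) (by simp; omega)
    (by simp; omega) hij hJJ
  simpa [hji.ne', not_lt.mpr hji.le] using H.symm

lemma comm_rel (n : ℕ) (q v : ℂ) (i j a b : ℕ) (hj : 1 ≤ j) (hji : j < i) (hi : i ≤ n)
    (hij : i + j ≠ n + 1) (hb : 1 ≤ b) (hba : b < a) (ha : a ≤ n) (hab : a + b ≠ n + 1) :
    z n q v i b * z n q v j a = z n q v j a * z n q v i b := by
  have H := frt_gen n q v i b j a (by simp; omega) (by simp; omega) (by simp; omega)
    (by simp; omega) hij hab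
  simpa [hji.ne', hba.ne', not_lt.mpr hji.le, not_lt.mpr hba.le] using H

lemma comm_rel2 (n : ℕ) (q v : ℂ) (i j a b : ℕ) (hi : 1 ≤ i) (hij' : i < j) (hj : j ≤ n)
    (hij : i + j ≠ n + 1) (hb : 1 ≤ b) (hba : b < a) (ha : a ≤ n) (hab : a + b ≠ n + 1) :
    z n q v i b * z n q v j a = z n q v j a * z n q v i b +
      (q - q⁻¹) • (z n q v j b * z n q v i a) := by
  have H := frt_gen n q v i b j a (by simp; omega) (by simp; omega) (by simp; omega)
    (by simp; omega) hij hab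
  rw [← comm_rel n q v j i a b hi hij' hj (by omega) hb hba ha hab] at H
  simpa [hba.ne', hij', hij'.ne, not_lt.mpr hba.le] using H

lemma key_sum {A : Type*} [Ring A] [Algebra ℂ A] (S : Finset ℕ) (q : ℂ) (hq : q ≠ 0)
    (y w X : ℕ → A) (u : A)
    (hw : ∀ s ∈ S, ∀ r ∈ S, s < r → w s * w r = q • (w r * w s))
    (h1 : ∀ s ∈ S, ∀ r ∈ S, r < s → X s * y r = y r * X s)
    (h2 : ∀ s ∈ S, X s * y s = q • (y s * X s))
    (h3 : ∀ s ∈ S, ∀ r ∈ S, s < r → X s * y r = y r * X s + (q - q⁻¹) • (y s * X r)) :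
    ∑ s ∈ S, ∑ r ∈ S, (X s * y r) ⊗ₜ[ℂ] (w s * w r * u) =
      q • ∑ s ∈ S, ∑ r ∈ S, (y r * X s) ⊗ₜ[ℂ] (w r * w s * u) := by
  have key : ∀ s ∈ S, ∀ r ∈ S, (X s * y r) ⊗ₜ[ℂ] (w s * w r * u) =
      q • ((y r * X s) ⊗ₜ[ℂ] (w r * w s * u)) +
      ((if s < r then (q - q⁻¹) • ((y s * X r) ⊗ₜ[ℂ] (w s * w r * u)) else 0) -
       (if r < s then (q - q⁻¹) • ((y r * X s) ⊗ₜ[ℂ] (w r * w s * u)) else 0)) := by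
    intro s hs r hr
    rcases lt_trichotomy s r with h | h | h
    · rw [if_pos h, if_neg (by omega), h3 s hs r hr h, hw s hs r hr h]
      simp only [TensorProduct.add_tmul, ← TensorProduct.smul_tmul', TensorProduct.tmul_smul,
        smul_mul_assoc]
      module
    · subst h
      simp [h2 s hs, TensorProduct.smul_tmul']
    · rw [if_pos h, if_neg (by omega), h1 s hs r hr h, hw r hr s hs h]
      simp only [TensorProduct.tmul_smul, smul_mul_assoc]
      have : (q - q⁻¹) * q = q * q - 1 := by field_simp
      rw [smul_smul, smul_smul, this]
      module
  rw [Finset.sum_congr rfl fun s hs => Finset.sum_congr rfl (key s hs)]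
  simp only [Finset.sum_add_distrib, Finset.sum_sub_distrib, Finset.smul_sum]
  rw [add_eq_left, sub_eq_zero]
  exact Finset.sum_comm

/-- The identities used in Case 2 of the proof of the theorem computing
`Δ(z_{ij}^N)` in `𝒪_q(B⁺)` of type `SO_n` with `n` odd; here `n₀ = (n+1)/2` and
`q^{n₀+3/2} := v^{2n₀+3}`. -/
theorem case2_identities (n : ℕ) (hn : 3 ≤ n) (hodd : Odd n) (q v : ℂ) (hq0 : q ≠ 0)
    (hv : v ^ 2 = q) (t j : ℕ) (ht : (n + 1) / 2 ≤ t) (htj : t < j) (hj : j ≤ n)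
    (b : ℕ → OB n q v ⊗[ℂ] OB n q v)
    (hb : ∀ s : ℕ, b s = z n q v ((n + 1) / 2) s ⊗ₜ[ℂ] z n q v s j)
    (b' c : OB n q v ⊗[ℂ] OB n q v)
    (hb' : b' = ∑ k ∈ Finset.Icc (t + 1) j, b k)
    (hc : c = b t * b' - q • (b' * b t)) :
    (c = (-(q - q⁻¹) * v ^ (2 * ((n + 1) / 2) + 3)) •
        ∑ s ∈ Finset.Icc (t + 1) j, ∑ k ∈ Finset.Icc ((n + 1) / 2 + 1) t,
          (q ^ (-(k : ℤ))) •
            ((z n q v (pr n k) s * z n q v k t) ⊗ₜ[ℂ] (z n q v s j * z n q v t j))) ∧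
    (b t * c = (q ^ 2) • (c * b t)) ∧
    (c * b' = (q ^ 2) • (b' * c)) := by
  obtain ⟨m, hm⟩ := hodd
  have hn0 : (n + 1) / 2 = m + 1 := by omega
  have hv0 : v ≠ 0 := by rintro rfl; apply hq0; rw [← hv]; simp
  rw [hn0] at ht ⊢
  rw [hn0] at hb
  set X : ℕ → OB n q v := fun s => ∑ k ∈ Finset.Icc (m + 2) t, (q ^ (-(k : ℤ))) •
        (z n q v (pr n k) s * z n q v k t) with hX
  set C : ℂ := -(q - q⁻¹) * v ^ (2 * (m + 1) + 3) with hC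
  have hw : ∀ s r, t ≤ s → s < r → r ≤ j →
      z n q v s j * z n q v r j = q • (z n q v r j * z n q v s j) := by
    intro s r h1 h2 h3
    exact col_rel n q v r s j (by omega) h2 (by omega) (by omega) (by omega) hj (by omega)
  have hcX : c = C • ∑ s ∈ Finset.Icc (t + 1) j, X s ⊗ₜ[ℂ] (z n q v s j * z n q v t j) := by
    rw [hc, hb', Finset.mul_sum, Finset.sum_mul, Finset.smul_sum, Finset.smul_sum]
    refine (Finset.sum_sub_distrib (fun i => b t * b i) (fun x => q • (b x * b t))).symm.trans ?_
    apply Finset.sum_congr rfl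
    intro s hs
    simp only [Finset.mem_Icc] at hs
    rw [hb, hb, Algebra.TensorProduct.tmul_mul_tmul, Algebra.TensorProduct.tmul_mul_tmul,
      hw t s le_rfl (by omega) hs.2, frt_mid n m q v hv0 hv hm s t ht (by omega) (by omega),
      TensorProduct.tmul_smul]
    refine (gen_tensor (A := OB n q v) _ _ _ _ _).trans ?_
    congr 1
    rw [hC, ← hv]; ring
  have hX1 : ∀ s, t < s → s ≤ j → z n q v (m+1) t * X s = q • (X s * z n q v (m+1) t) := by
    intro s h1 h2
    simp only [hX, Finset.mul_sum, Finset.sum_mul, Finset.smul_sum]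
    apply Finset.sum_congr rfl
    intro k hk
    simp only [Finset.mem_Icc] at hk
    have hp : pr n k = n + 1 - k := rfl
    rw [mul_smul_comm, smul_mul_assoc, smul_comm q]
    congr 1
    rw [← mul_assoc, comm_rel n q v (m+1) (pr n k) s t (by omega) (by omega) (by omega) (by omega)
      (by omega) h1 (by omega) (by omega), mul_assoc,
      col_rel n q v k (m+1) t (by omega) (by omega) (by omega) (by omega) (by omega) (by omega)
        (by omega), mul_smul_comm, mul_assoc]
  have hX2 : ∀ s r, t < r → r ≤ j → X s * z n q v (m+1) r =
      ∑ k ∈ Finset.Icc (m + 2) t, (q ^ (-(k : ℤ))) •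
        ((z n q v (pr n k) s * z n q v (m+1) r) * z n q v k t) := by
    intro s r h1 h2
    simp only [hX, Finset.sum_mul]
    apply Finset.sum_congr rfl
    intro k hk
    simp only [Finset.mem_Icc] at hk
    rw [smul_mul_assoc, mul_assoc, comm_rel n q v k (m+1) r t (by omega) (by omega) (by omega)
      (by omega) (by omega) h1 (by omega) (by omega), mul_assoc]
  refine ⟨?_, ?_, ?_⟩
  · rw [hcX]
    congr 1
    apply Finset.sum_congr rfl
    intro s hs
    simp only [hX, TensorProduct.sum_tmul, TensorProduct.smul_tmul']
  · rw [hcX, hb, mul_smul_comm, smul_mul_assoc, smul_comm (q ^ 2)]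
    congr 1
    rw [Finset.mul_sum, Finset.sum_mul, Finset.smul_sum]
    apply Finset.sum_congr rfl
    intro s hs
    simp only [Finset.mem_Icc] at hs
    rw [Algebra.TensorProduct.tmul_mul_tmul, Algebra.TensorProduct.tmul_mul_tmul,
      hX1 s (by omega) hs.2, ← mul_assoc, hw t s le_rfl (by omega) hs.2,
      smul_mul_assoc, TensorProduct.tmul_smul, ← TensorProduct.smul_tmul', smul_smul, sq]
  · rw [hcX, mul_smul_comm, smul_mul_assoc, smul_comm (q ^ 2)]
    congr 1
    have K := key_sum (Finset.Icc (t+1) j) q hq0 (fun r => z n q v (m+1) r) (fun r => z n q v r j)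
      X (z n q v t j) ?_ ?_ ?_ ?_
    · rw [hb', Finset.sum_mul_sum, Finset.sum_mul_sum]
      have e1 : ∀ s ∈ Finset.Icc (t+1) j, ∀ r ∈ Finset.Icc (t+1) j,
          X s ⊗ₜ[ℂ] (z n q v s j * z n q v t j) * b r =
          q • ((X s * z n q v (m+1) r) ⊗ₜ[ℂ] (z n q v s j * z n q v r j * z n q v t j)) := by
        intro s hs r hr
        simp only [Finset.mem_Icc] at hs hr
        rw [hb, Algebra.TensorProduct.tmul_mul_tmul, mul_assoc (z n q v s j),
          hw t r le_rfl (by omega) hr.2, mul_smul_comm, TensorProduct.tmul_smul, ← mul_assoc]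
      rw [Finset.sum_congr rfl fun s hs => Finset.sum_congr rfl (e1 s hs)]
      simp only [← Finset.smul_sum]
      rw [K, smul_smul, ← sq, Finset.sum_comm]
      congr 1
      apply Finset.sum_congr rfl
      intro r _
      apply Finset.sum_congr rfl
      intro s _
      rw [hb, Algebra.TensorProduct.tmul_mul_tmul, mul_assoc (z n q v r j)]
    · intro s hs r hr h
      simp only [Finset.mem_Icc] at hs hr
      exact hw s r (by omega) h hr.2
    · intro s hs r hr h
      simp only [Finset.mem_Icc] at hs hr
      rw [hX2 s r (by omega) hr.2]
      simp only [hX, Finset.mul_sum]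
      apply Finset.sum_congr rfl
      intro k hk
      simp only [Finset.mem_Icc] at hk
      have hp : pr n k = n + 1 - k := rfl
      rw [mul_smul_comm, ← mul_assoc, comm_rel n q v (m+1) (pr n k) s r (by omega) (by omega)
        (by omega) (by omega) (by omega) h (by omega) (by omega)]
    · intro s hs
      simp only [Finset.mem_Icc] at hs
      rw [hX2 s s (by omega) hs.2]
      simp only [hX, Finset.mul_sum, Finset.smul_sum]
      apply Finset.sum_congr rfl
      intro k hk
      simp only [Finset.mem_Icc] at hk
      have hp : pr n k = n + 1 - k := rfl
      rw [mul_smul_comm, smul_comm q, ← mul_assoc, col_rel n q v (m+1) (pr n k) s (by omega)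
        (by omega) (by omega) (by omega) (by omega) (by omega) (by omega), smul_mul_assoc]
    · intro s hs r hr h
      simp only [Finset.mem_Icc] at hs hr
      rw [hX2 s r (by omega) hr.2]
      simp only [hX, Finset.mul_sum, Finset.smul_sum]
      rw [← Finset.sum_add_distrib]
      apply Finset.sum_congr rfl
      intro k hk
      simp only [Finset.mem_Icc] at hk
      have hp : pr n k = n + 1 - k := rfl
      rw [mul_smul_comm, mul_smul_comm, smul_comm (q - q⁻¹), ← smul_add, ← mul_assoc, ← mul_assoc,
        comm_rel2 n q v (pr n k) (m+1) r s (by omega) (by omega)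
        (by omega) (by omega) (by omega) h (by omega) (by omega), add_mul, smul_mul_assoc]

end SOq
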